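/- arXiv:2509.14073 — 2 statements merged into one kernel-verified Lean document; each statement's English description precedes it below -/
import Mathlib

section
/- With E(τ) := e^{−πτ/6} ∏_{n=1}^∞ (1 − e^{−4πnτ}) for τ > 0 (i.e. the Dedekind eta function η(2iτ)), one has lim_{τ→0⁺} √(2τ) · e^{π/(24τ)} · E(τ) = 1. -/
open Real Filter Set

/-- The Dedekind eta function `η(2iτ) = e^{−πτ/6} ∏_{n=1}^∞ (1 − e^{−4πnτ})`. -/
noncomputable def dedekindEta (τ : ℝ) : ℝ :=
  Real.exp (-π * τ / 6) * ∏' n : ℕ, (1 - Real.exp (-4 * π * (n + 1) * τ))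

lemma multipliable_one_sub_pow_succ {q : ℝ} (hq : |q| < 1) :
    Multipliable fun n : ℕ ↦ 1 - q ^ (n + 1) := by
  simp_rw [sub_eq_add_neg]
  apply multipliable_one_add_of_summable
  simpa using (summable_nat_add_iff 1).mpr (summable_geometric_of_lt_one (abs_nonneg q) hq)

lemma dedekindEta_eq_tprod_pow (τ : ℝ) :
    dedekindEta τ =
      Real.exp (-π * τ / 6) * ∏' n : ℕ, (1 - Real.exp (-4 * π * τ) ^ (n + 1)) := by
  rw [dedekindEta]
  congr 1
  refine tprod_congr fun n ↦ ?_
  rw [← Real.exp_nat_mul]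
  push_cast
  ring_nf

/-- Comparison with Mathlib's eta function on the positive imaginary axis. -/
lemma ofReal_dedekindEta {τ : ℝ} (hτ : 0 < τ) :
    (dedekindEta τ : ℂ) = ModularForm.eta ((2 * τ : ℝ) * Complex.I) := by
  have hq : |Real.exp (-4 * π * τ)| < 1 := by
    rw [abs_of_pos (Real.exp_pos _), Real.exp_lt_one_iff]
    nlinarith [mul_pos Real.pi_pos hτ]
  have hI := Complex.I_sq
  rw [dedekindEta_eq_tprod_pow, ModularForm.eta, Complex.ofReal_mul]
  congr 1
  · rw [Function.Periodic.qParam, Complex.ofReal_exp]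
    congr 1
    push_cast
    linear_combination (-(π : ℂ) * τ / 6) * hI
  · refine ((multipliable_one_sub_pow_succ hq).map_tprod Complex.ofRealHom
      Complex.continuous_ofReal).trans (tprod_congr fun n ↦ ?_)
    simp only [Complex.ofRealHom_eq_coe, ModularForm.eta_q_eq_pow]
    push_cast
    congr 3
    linear_combination (-4 * (π : ℂ) * τ) * hI

lemma Complex.sqrt_ofReal_mul {r : ℝ} (hr : 0 < r) {z : ℂ} (hz : z ≠ 0) :
    Complex.sqrt (r * z) = (√r : ℝ) * Complex.sqrt z := by
  have hr' : (r : ℂ) ≠ 0 := by exact_mod_cast hr.ne'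
  simp only [Complex.sqrt]
  rw [Complex.cpow_def_of_ne_zero (mul_ne_zero hr' hz), Complex.log_ofReal_mul hr hz, add_mul,
    Complex.exp_add, ← Complex.cpow_def_of_ne_zero hz, Complex.ofReal_log hr.le,
    ← Complex.cpow_def_of_ne_zero hr', Real.sqrt_eq_rpow, Complex.ofReal_cpow hr.le]
  norm_num

/-- The inversion formula `η(-1/z) = √(z/i) η(z)` at `z = 2iτ`. -/
lemma dedekindEta_one_div {τ : ℝ} (hτ : 0 < τ) :
    dedekindEta (1 / (4 * τ)) = √(2 * τ) * dedekindEta τ := by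
  have hI : Complex.sqrt Complex.I ≠ 0 := by simp [Complex.sqrt]
  have hτ' : (τ : ℂ) ≠ 0 := by exact_mod_cast hτ.ne'
  have hz : ((2 * τ : ℝ) * Complex.I) ∈ UpperHalfPlane.upperHalfPlaneSet := by
    simpa [UpperHalfPlane.upperHalfPlaneSet] using hτ
  have h := ModularForm.eta_comp_eq_csqrt_I_inv hz
  simp only [Function.comp_apply, Pi.smul_apply, Pi.mul_apply, smul_eq_mul] at h
  rw [Complex.sqrt_ofReal_mul (by positivity) Complex.I_ne_zero, ← ofReal_dedekindEta hτ] at h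
  have hinv : -1 / ((2 * τ : ℝ) * Complex.I) = ((2 * (1 / (4 * τ)) : ℝ) : ℂ) * Complex.I := by
    push_cast
    field_simp
    rw [Complex.I_sq]
    norm_num
  rw [hinv, ← ofReal_dedekindEta (by positivity)] at h
  apply Complex.ofReal_injective
  rw [h]
  push_cast
  field_simp

lemma tendsto_tprod_one_sub_pow_succ :
    Tendsto (fun q : ℝ ↦ ∏' n : ℕ, (1 - q ^ (n + 1))) (nhds 0) (nhds 1) := by
  have h := tendsto_tprod_one_add_of_dominated_convergence (𝓕 := nhds (0 : ℝ)) (g := 0)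
    (f := fun (q : ℝ) (n : ℕ) ↦ -q ^ (n + 1)) (bound := fun n ↦ (1 / 2 : ℝ) ^ (n + 1))
  simp only [Pi.zero_apply, norm_neg, norm_pow, add_zero, tprod_one] at h
  simp_rw [sub_eq_add_neg]
  refine h ((summable_nat_add_iff 1).mpr (summable_geometric_of_abs_lt_one (by norm_num)))
    (fun k ↦ by simpa using ((continuous_pow (M := ℝ) (k + 1)).tendsto 0).neg) ?_
  filter_upwards [Metric.ball_mem_nhds (0 : ℝ) (by norm_num : (0 : ℝ) < 1 / 2)] with q hq k
  exact pow_le_pow_left₀ (norm_nonneg _) (mem_ball_zero_iff.mp hq).le _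

/-- Small-`τ` asymptotics of the Dedekind eta function:
`lim_{τ→0⁺} √(2τ) e^{π/(24τ)} η(2iτ) = 1`. -/
theorem dedekindEta_small_tau_asymptotics :
    Tendsto (fun τ : ℝ => Real.sqrt (2 * τ) * Real.exp (π / (24 * τ)) * dedekindEta τ)
      (nhdsWithin 0 (Ioi 0)) (nhds 1) := by
  have hq : Tendsto (fun τ : ℝ ↦ Real.exp (-(π * τ⁻¹))) (nhdsWithin 0 (Ioi 0)) (nhds 0) :=
    Real.tendsto_exp_neg_atTop_nhds_zero.comp
      (tendsto_inv_nhdsGT_zero.const_mul_atTop Real.pi_pos)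
  refine (tendsto_tprod_one_sub_pow_succ.comp hq).congr' ?_
  filter_upwards [self_mem_nhdsWithin] with τ hτ
  have hτ : 0 < τ := hτ
  rw [mul_right_comm, ← dedekindEta_one_div hτ, dedekindEta_eq_tprod_pow, mul_right_comm,
    ← Real.exp_add, show -π * (1 / (4 * τ)) / 6 + π / (24 * τ) = 0 by field_simp; norm_num,
    Real.exp_zero, one_mul, show -4 * π * (1 / (4 * τ)) = -(π * τ⁻¹) by field_simp]
  rfl
end

section
/- For every τ > 0, setting f(τ) := Σ_{n=1}^∞ (−1)^{n−1} n sin(2πn/3) exp(−(2π/3) n² τ) and E(τ) := e^{−πτ/6} ∏_{n=1}^∞ (1 − e^{−4πnτ}), one has the open-channel identity (8/√3) · f(τ)/E(τ) = (6/τ) · ( Σ_{k∈ℤ} (k + 1/6) exp(−(π/τ)((3/2)(k+1/6)² − 1/24)) ) / ( ∏_{n=1}^∞ (1 − e^{−πn/τ}) ), where the sum over ℤ converges absolutely and the infinite product converges. -/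
open Real

/-- `f τ = Σ_{n=1}^∞ (−1)^{n−1} n sin(2πn/3) exp(−(2π/3) n² τ)`. The `n = 0` term vanishes,
and for `n ≥ 1` one has `(−1)^{n+1} = (−1)^{n−1}`. -/
noncomputable def f (τ : ℝ) : ℝ :=
  ∑' n : ℕ, (-1 : ℝ) ^ (n + 1) * n * Real.sin (2 * π * n / 3) * Real.exp (-(2 * π / 3) * n ^ 2 * τ)

/-- The infinite product in the Dedekind eta function converges on the positive imaginary axis. -/
theorem multipliable_one_sub_exp {x : ℝ} (hx : 0 < x) :
    Multipliable fun n : ℕ ↦ 1 - Real.exp (-2 * π * (n + 1) * x) := by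
  have hlt : Real.exp (-2 * π * x) < 1 := by
    rw [Real.exp_lt_one_iff]
    nlinarith [mul_pos pi_pos hx]
  have hs : Summable fun n : ℕ ↦ ‖-Real.exp (-2 * π * (n + 1) * x)‖ := by
    refine ((summable_nat_add_iff 1).mpr
      (summable_geometric_of_lt_one (Real.exp_pos _).le hlt)).congr fun n ↦ ?_
    rw [norm_neg, Real.norm_eq_abs, abs_of_pos (Real.exp_pos _), ← Real.exp_nat_mul]
    congr 1
    push_cast
    ring
  simpa [sub_eq_add_neg] using multipliable_one_add_of_summable hs

/-- The Dedekind eta function on the positive imaginary axis, as a real product. -/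
theorem eta_I_mul {x : ℝ} (hx : 0 < x) :
    ModularForm.eta (Complex.I * x) =
      ↑(Real.exp (-π * x / 12) * ∏' n : ℕ, (1 - Real.exp (-2 * π * (n + 1) * x))) := by
  have hprod := (multipliable_one_sub_exp hx).hasProd.map Complex.ofRealHom
    Complex.continuous_ofReal
  rw [ModularForm.eta, Complex.ofReal_mul]
  congr 1
  · rw [Function.Periodic.qParam, Complex.ofReal_exp]
    congr 1
    push_cast
    linear_combination (π * x / 12 : ℂ) * Complex.I_mul_I
  · refine Eq.trans (tprod_congr fun n ↦ ?_) hprod.tprod_eq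
    rw [ModularForm.eta_q_eq_cexp]
    simp only [Function.comp_apply, Complex.ofRealHom_eq_coe, Complex.ofReal_sub,
      Complex.ofReal_one, Complex.ofReal_exp]
    congr 2
    push_cast
    linear_combination (2 * π * (n + 1) * x : ℂ) * Complex.I_mul_I

/-- The square root of a positive multiple of `I`. -/
theorem sqrt_I_mul {x : ℝ} (hx : 0 < x) :
    Complex.sqrt (Complex.I * x) = Complex.sqrt Complex.I * (Real.sqrt x : ℝ) := by
  have hx' : (x : ℂ) ≠ 0 := mod_cast hx.ne'
  rw [Complex.sqrt, Complex.sqrt, Real.sqrt_eq_rpow, Complex.ofReal_cpow hx.le,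
    Complex.cpow_def_of_ne_zero (mul_ne_zero Complex.I_ne_zero hx'),
    Complex.cpow_def_of_ne_zero Complex.I_ne_zero, Complex.cpow_def_of_ne_zero hx',
    mul_comm Complex.I, Complex.log_ofReal_mul hx Complex.I_ne_zero, ← Complex.exp_add,
    Complex.ofReal_log hx.le]
  congr 1
  push_cast
  ring

/-- The inversion formula of the Dedekind eta function on the positive imaginary axis. -/
theorem eta_I_mul_inv {x : ℝ} (hx : 0 < x) :
    ModularForm.eta (Complex.I * (x⁻¹ : ℝ)) =
      (Real.sqrt x : ℝ) * ModularForm.eta (Complex.I * x) := by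
  have hx' : (x : ℂ) ≠ 0 := mod_cast hx.ne'
  have h := ModularForm.eta_comp_eq_csqrt_I_inv
    (show Complex.I * x ∈ UpperHalfPlane.upperHalfPlaneSet by simpa using hx)
  have harg : -1 / (Complex.I * x) = Complex.I * (x⁻¹ : ℝ) := by
    rw [div_eq_iff (mul_ne_zero Complex.I_ne_zero hx')]
    push_cast
    field_simp
    simp
  have hI : Complex.sqrt Complex.I ≠ 0 := by
    simp [Complex.sqrt]
  simp only [Function.comp_apply, harg, Pi.smul_apply, Pi.mul_apply, smul_eq_mul,
    sqrt_I_mul hx] at h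
  rw [h]
  field_simp

/-- The closed-channel sum is half of a sine theta kernel. -/
theorem f_eq_sinKernel {τ : ℝ} (hτ : 0 < τ) :
    f τ = HurwitzZeta.sinKernel ((1 / 6 : ℝ) : UnitAddCircle) (2 * τ / 3) / 2 := by
  have h := (HurwitzZeta.hasSum_nat_sinKernel (1 / 6) (t := 2 * τ / 3) (by positivity)).div_const 2
  rw [← h.tsum_eq, f]
  refine tsum_congr fun n ↦ ?_
  have hsin : Real.sin (2 * π * (1 / 6) * n) = (-1) ^ (n + 1) * Real.sin (2 * π * n / 3) := by
    rw [show 2 * π * (1 / 6) * n = n * π - 2 * π * n / 3 by ring, Real.sin_sub,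
      Real.sin_nat_mul_pi, Real.cos_nat_mul_pi]
    ring
  rw [hsin, show -(2 * π / 3) * (n : ℝ) ^ 2 * τ = -π * n ^ 2 * (2 * τ / 3) by ring]
  ring

/-- The open-channel sum is a multiple of an odd theta kernel. -/
theorem hasSum_open_channel {τ : ℝ} (hτ : 0 < τ) :
    HasSum (fun k : ℤ ↦
        ((k : ℝ) + 1 / 6) * Real.exp (-(π / τ) * (3 / 2 * ((k : ℝ) + 1 / 6) ^ 2 - 1 / 24)))
      (Real.exp (π / (24 * τ)) *
        HurwitzZeta.oddKernel ((1 / 6 : ℝ) : UnitAddCircle) (3 / (2 * τ))) := by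
  refine ((HurwitzZeta.hasSum_int_oddKernel (1 / 6) (x := 3 / (2 * τ)) (by positivity)).mul_left
    (Real.exp (π / (24 * τ)))).congr_fun fun k ↦ ?_
  rw [mul_left_comm, ← Real.exp_add]
  congr 2
  field_simp
  ring

/-- The inversion formula for `f`. -/
theorem oddKernel_eq_mul_f {τ : ℝ} (hτ : 0 < τ) :
    HurwitzZeta.oddKernel ((1 / 6 : ℝ) : UnitAddCircle) (3 / (2 * τ)) =
      4 * τ * Real.sqrt (2 * τ) / (3 * Real.sqrt 3) * f τ := by
  have hpow : (3 / (2 * τ)) ^ (3 / 2 : ℝ) = 3 / (2 * τ) * (Real.sqrt 3 / Real.sqrt (2 * τ)) := by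
    rw [show (3 / 2 : ℝ) = 1 + 1 / 2 by norm_num, Real.rpow_add (by positivity), Real.rpow_one,
      ← Real.sqrt_eq_rpow, Real.sqrt_div (by norm_num)]
  rw [HurwitzZeta.oddKernel_functional_equation, hpow, f_eq_sinKernel hτ, one_div_div]
  field_simp
  ring

/-- The inversion formula of the eta function, relating the two infinite products. -/
theorem exp_mul_tprod_eq {τ : ℝ} (hτ : 0 < τ) :
    Real.exp (-(π / (24 * τ))) * ∏' n : ℕ, (1 - Real.exp (-π * (n + 1) / τ)) =
      Real.sqrt (2 * τ) * dedekindEta τ := by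
  have h := eta_I_mul_inv (x := 2 * τ) (by positivity)
  rw [eta_I_mul (by positivity), eta_I_mul (by positivity), ← Complex.ofReal_mul,
    Complex.ofReal_inj] at h
  rw [dedekindEta]
  convert h using 2
  · congr 1
    field_simp
    ring
  · refine tprod_congr fun n ↦ ?_
    congr 2
    field_simp
  · congr 2
    · ring
    · ext n
      ring_nf

/-- Open-channel identity: for every `τ > 0`,
`(8/√3) f(τ)/η(2iτ)
  = (6/τ) (Σ_{k∈ℤ} (k+1/6) exp(−(π/τ)((3/2)(k+1/6)² − 1/24))) / ∏_{n=1}^∞ (1 − e^{−πn/τ})`,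
where the sum over `ℤ` converges absolutely and the infinite product converges. -/
theorem open_channel_identity (τ : ℝ) (hτ : 0 < τ) :
    Summable (fun k : ℤ =>
      |((k : ℝ) + 1 / 6) * Real.exp (-(π / τ) * (3 / 2 * ((k : ℝ) + 1 / 6) ^ 2 - 1 / 24))|)
    ∧ Multipliable (fun n : ℕ => 1 - Real.exp (-π * (n + 1) / τ))
    ∧ 8 / Real.sqrt 3 * f τ / dedekindEta τ
      = 6 / τ *
        (∑' k : ℤ, ((k : ℝ) + 1 / 6) * Real.exp (-(π / τ) * (3 / 2 * ((k : ℝ) + 1 / 6) ^ 2 - 1 / 24)))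
        / ∏' n : ℕ, (1 - Real.exp (-π * (n + 1) / τ)) := by
  have hsum := hasSum_open_channel hτ
  refine ⟨hsum.summable.abs, ?_, ?_⟩
  · refine (multipliable_one_sub_exp (x := (2 * τ)⁻¹) (by positivity)).congr fun n ↦ ?_
    congr 2
    field_simp
  · have hη : dedekindEta τ ≠ 0 := by
      have h := ModularForm.eta_ne_zero
        (show Complex.I * (2 * τ : ℝ) ∈ UpperHalfPlane.upperHalfPlaneSet by simpa using hτ)
      rw [eta_I_mul (by positivity), Complex.ofReal_ne_zero] at h
      rw [dedekindEta]
      convert h using 3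
      · ring
      · ext n
        ring_nf
    have hprod : ∏' n : ℕ, (1 - Real.exp (-π * (n + 1) / τ)) =
        Real.exp (π / (24 * τ)) * (Real.sqrt (2 * τ) * dedekindEta τ) := by
      rw [← exp_mul_tprod_eq hτ, ← mul_assoc, ← Real.exp_add, add_neg_cancel, Real.exp_zero,
        one_mul]
    rw [hsum.tsum_eq, hprod, oddKernel_eq_mul_f hτ]
    have h2 : Real.sqrt (2 * τ) ≠ 0 := by positivity
    field_simp
    ring
end
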